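/- The basin of attraction B(A) = {(x,z) ∈ S¹ × [0,1] : f_z^n(x,z) → 0} has positive 2-dimensional Lebesgue measure. -/

import Mathlib

/-!
Write `a(x) = cos (2πx) / 32`, so that the fibre coordinate evolves by `z ↦ z (1 + a(x) (1 - z))`.
As long as `0 ≤ z ≤ 1/1024`, the multiplier is at most `1 + u(x)` with `u = a + 1/32768`, and
`1 + u ≤ g²` with `g = 1 + u/2 - u²/16`, a polynomial majorant of `√(1 + u)`.

No ergodic theorem is needed. Since `g` is a trigonometric polynomial of degree two, its average
over the three preimages of a point under the tripling map is a constant `ρ`, and `ρ < 1` because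
of the quadratic term (strict concavity of the square root). Hence the cocycle
`G_n(x) = ∏_{k < n} g(3^k x)` satisfies `∫₀¹ G_n = ρ^n` (`integral_kanProd`). This is summable, so
`G_n(x) → 0` for almost every `x` (`ae_tendsto_kanProd`). For such an `x`, let `C ≥ 1` bound the
sequence `G_n(x)`. If `0 ≤ z₀ ≤ 1 / (1024 C²)`, the orbit never leaves `[0, 1/1024]`, and
`z_n ≤ G_n(x)² z₀ → 0` (`kanMap_orbit_bound`). Almost every vertical fibre therefore meets the
basin in a set of positive length, and Fubini gives positive area.
-/

open Real Set Filter Topology MeasureTheory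

noncomputable def kanMap (p : ℝ × ℝ) : ℝ × ℝ :=
  (Int.fract (3 * p.1), p.2 + Real.cos (2 * π * p.1) * (p.2 / 32) * (1 - p.2))

/-- Majorant `1 + u/2 - u²/16` of `√(1 + u)`, at `u = cos (2πx) / 32 + 1/32768`, where `1/32768`
absorbs the factor `1 - z` of the fibre map for `0 ≤ z ≤ 1/1024`. -/
noncomputable def kanWeight (x : ℝ) : ℝ :=
  1 + (Real.cos (2 * π * x) / 32 + 1 / 32768) / 2
    - (Real.cos (2 * π * x) / 32 + 1 / 32768) ^ 2 / 16

/-- The multiplicative cocycle `∏_{k < n} kanWeight (3^k x)` over the tripling map. -/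
noncomputable def kanProd (n : ℕ) (x : ℝ) : ℝ :=
  ∏ k ∈ Finset.range n, kanWeight (3 ^ k * x)

/-- The average of `kanWeight` over the three preimages of a point under tripling. -/
noncomputable def kanRate : ℝ := 1 + 1 / 65536 - (1 / 2048 + (1 / 32768) ^ 2) / 16

lemma kanWeight_nonneg (x : ℝ) : 0 ≤ kanWeight x := by
  unfold kanWeight
  have h1 := Real.neg_one_le_cos (2 * π * x)
  have h2 := Real.cos_le_one (2 * π * x)
  nlinarith

lemma one_add_le_kanWeight_sq (x : ℝ) :
    1 + (Real.cos (2 * π * x) / 32 + 1 / 32768) ≤ kanWeight x ^ 2 := by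
  unfold kanWeight
  have h2 := Real.cos_le_one (2 * π * x)
  set u := Real.cos (2 * π * x) / 32 + 1 / 32768 with hu
  have hu1 : u ≤ 1 := by rw [hu]; linarith
  have : (1 + u / 2 - u ^ 2 / 16) ^ 2 = 1 + u + u ^ 2 * (1 / 8 - u / 16 + u ^ 2 / 256) := by ring
  rw [this]
  have : 0 ≤ u ^ 2 * (1 / 8 - u / 16 + u ^ 2 / 256) :=
    mul_nonneg (sq_nonneg u) (by nlinarith [sq_nonneg u])
  linarith

lemma continuous_kanWeight : Continuous kanWeight := by
  unfold kanWeight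
  fun_prop

lemma kanWeight_add_int (x : ℝ) (m : ℤ) : kanWeight (x + m) = kanWeight x := by
  unfold kanWeight
  have : 2 * π * (x + m) = 2 * π * x + m * (2 * π) := by ring
  rw [this, Real.cos_add_int_mul_two_pi]

lemma kanWeight_sum (x : ℝ) :
    kanWeight x + kanWeight (x + 1 / 3) + kanWeight (x + 2 / 3) = 3 * kanRate := by
  unfold kanWeight kanRate
  have e1 : 2 * π * (x + 1 / 3) = (2 * π * x - π / 3) + π := by ring
  have e2 : 2 * π * (x + 2 / 3) = (2 * π * x + π / 3) + π := by ring
  rw [e1, e2, Real.cos_add_pi, Real.cos_add_pi, Real.cos_sub, Real.cos_add,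
    Real.cos_pi_div_three, Real.sin_pi_div_three]
  have h3 : √3 ^ 2 = (3 : ℝ) := Real.sq_sqrt (by norm_num)
  have hs := Real.sin_sq_add_cos_sq (2 * π * x)
  set c := Real.cos (2 * π * x)
  set s := Real.sin (2 * π * x)
  have hs' : s ^ 2 = 1 - c ^ 2 := by linarith
  ring_nf
  rw [h3, hs']
  ring

lemma kanProd_nonneg (n : ℕ) (x : ℝ) : 0 ≤ kanProd n x :=
  Finset.prod_nonneg fun _ _ => kanWeight_nonneg _

lemma continuous_kanProd (n : ℕ) : Continuous (kanProd n) := by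
  unfold kanProd
  exact continuous_finsetProd _ fun k _ => continuous_kanWeight.comp (by fun_prop)

lemma kanProd_succ' (n : ℕ) (x : ℝ) :
    kanProd (n + 1) x = kanWeight x * kanProd n (3 * x) := by
  unfold kanProd
  rw [Finset.prod_range_succ', mul_comm]
  simp [pow_succ, mul_assoc]

lemma kanProd_add_int (n : ℕ) (x : ℝ) (m : ℤ) : kanProd n (x + m) = kanProd n x := by
  unfold kanProd
  refine Finset.prod_congr rfl fun k _ => ?_
  have : (3 : ℝ) ^ k * (x + m) = 3 ^ k * x + ((3 ^ k * m : ℤ) : ℝ) := by push_cast; ring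
  rw [this, kanWeight_add_int]

/-- Tripling preserves Lebesgue measure on the circle. -/
lemma integral_comp_three_mul {H : ℝ → ℝ} (hc : Continuous H) (hp : Function.Periodic H 1) :
    ∫ x in (0:ℝ)..1, H (3 * x) = ∫ x in (0:ℝ)..1, H x := by
  have i : ∀ a b, IntervalIntegrable H volume a b := fun a b => hc.intervalIntegrable a b
  rw [intervalIntegral.integral_comp_mul_left H (by norm_num : (3:ℝ) ≠ 0),
    ← intervalIntegral.integral_add_adjacent_intervals (i (3 * 0) 1) (i 1 (3 * 1)),
    ← intervalIntegral.integral_add_adjacent_intervals (i 1 2) (i 2 (3 * 1))]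
  have h1 := hp.intervalIntegral_add_eq 1 0
  have h2 := hp.intervalIntegral_add_eq 2 0
  norm_num at h1 h2 ⊢
  rw [h1, h2]
  ring

/-- The transfer operator of tripling with weight `kanWeight` acts on `1` as the scalar `kanRate`,
in its dual (integrated) form. -/
lemma integral_kanWeight_mul {H : ℝ → ℝ} (hc : Continuous H) (hp : Function.Periodic H 1) :
    ∫ x in (0:ℝ)..1, kanWeight x * H (3 * x) = kanRate * ∫ x in (0:ℝ)..1, H x := by
  set F : ℝ → ℝ := fun x => kanWeight x * H (3 * x) with hF
  have hw := continuous_kanWeight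
  have hFc : Continuous F := by rw [hF]; fun_prop
  have hFp : Function.Periodic F 1 := by
    intro x
    have h1 := kanWeight_add_int x 1
    have h2 : H (3 * (x + 1)) = H (3 * x) := by
      have := hp.nat_mul 3 (3 * x)
      rw [← this]; congr 1; push_cast; ring
    push_cast at h1
    simp only [hF, h1, h2]
  -- Rotating by a third leaves both the integral of `F` and the factor `H (3 x)` unchanged.
  have shift : ∀ t : ℝ, ∫ x in (0:ℝ)..1, F (x + t) = ∫ x in (0:ℝ)..1, F x := by
    intro t
    rw [intervalIntegral.integral_comp_add_right]
    have := hFp.intervalIntegral_add_eq t 0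
    rw [zero_add] at this
    rw [zero_add, add_comm 1 t, this]
  have hsum : ∀ x, F x + F (x + 1 / 3) + F (x + 2 / 3) = 3 * kanRate * H (3 * x) := by
    intro x
    have h1 : H (3 * (x + 1 / 3)) = H (3 * x) := by
      rw [← hp (3 * x)]; congr 1; ring
    have h2 : H (3 * (x + 2 / 3)) = H (3 * x) := by
      rw [← hp (3 * x), ← hp (3 * x + 1)]; congr 1; ring
    simp only [hF, h1, h2]
    rw [← kanWeight_sum x]; ring
  have i : ∀ t : ℝ, IntervalIntegrable (fun x => F (x + t)) volume 0 1 := fun t =>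
    (hFc.comp (by fun_prop)).intervalIntegrable _ _
  have i0 : IntervalIntegrable F volume 0 1 := hFc.intervalIntegrable _ _
  have key : ∫ x in (0:ℝ)..1, (F x + F (x + 1 / 3) + F (x + 2 / 3)) =
      3 * ∫ x in (0:ℝ)..1, F x := by
    rw [intervalIntegral.integral_add (i0.add (i _)) (i _),
      intervalIntegral.integral_add i0 (i _), shift, shift]
    ring
  simp_rw [hsum] at key
  rw [intervalIntegral.integral_const_mul, integral_comp_three_mul hc hp] at key
  linarith

lemma integral_kanProd (n : ℕ) : ∫ x in (0:ℝ)..1, kanProd n x = kanRate ^ n := by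
  induction n with
  | zero => simp [kanProd]
  | succ n ih =>
    simp_rw [kanProd_succ']
    rw [integral_kanWeight_mul (continuous_kanProd n), ih, pow_succ, mul_comm]
    intro x
    simpa using kanProd_add_int n x 1

lemma ae_tendsto_kanProd :
    ∀ᵐ x ∂(volume.restrict (Ioc (0:ℝ) 1)), Tendsto (fun n => kanProd n x) atTop (𝓝 0) := by
  have hr0 : (0:ℝ) ≤ kanRate := by unfold kanRate; norm_num
  have hr1 : kanRate < 1 := by unfold kanRate; norm_num
  have hm : ∀ n, Measurable fun x => ENNReal.ofReal (kanProd n x) := fun n =>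
    (continuous_kanProd n).measurable.ennreal_ofReal
  have hint : ∀ n, ∫⁻ x in Ioc (0:ℝ) 1, ENNReal.ofReal (kanProd n x) =
      ENNReal.ofReal (kanRate ^ n) := by
    intro n
    rw [← integral_kanProd n, intervalIntegral.integral_of_le zero_le_one,
      ofReal_integral_eq_lintegral_ofReal]
    · exact ((continuous_kanProd n).intervalIntegrable 0 1).1
    · exact Filter.Eventually.of_forall fun x => kanProd_nonneg n x
  have hfin : ∫⁻ x in Ioc (0:ℝ) 1, ∑' n, ENNReal.ofReal (kanProd n x) ≠ ⊤ := by
    rw [lintegral_tsum fun n => (hm n).aemeasurable]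
    simp_rw [hint]
    exact (summable_geometric_of_lt_one hr0 hr1).tsum_ofReal_ne_top
  filter_upwards [ae_lt_top (Measurable.tsum hm) hfin] with x hx
  have h := ENNReal.tendsto_atTop_zero_of_tsum_ne_top hx.ne
  have h' := (ENNReal.tendsto_toReal ENNReal.zero_ne_top).comp h
  simpa [Function.comp_def, ENNReal.toReal_ofReal, kanProd_nonneg] using h'

/-- While the cocycle stays below `C`, a small initial height keeps the orbit in the strip
`z ≤ 1/1024`, where the height is controlled by the square of the cocycle. -/
lemma kanMap_orbit_bound {x z C : ℝ} (hz : 0 ≤ z) (hzC : C ^ 2 * z ≤ 1 / 1024)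
    (hC : ∀ n, kanProd n x ≤ C) (n : ℕ) :
    (∃ m : ℤ, (kanMap^[n] (x, z)).1 = 3 ^ n * x + m) ∧
      0 ≤ (kanMap^[n] (x, z)).2 ∧ (kanMap^[n] (x, z)).2 ≤ kanProd n x ^ 2 * z := by
  induction n with
  | zero => exact ⟨⟨0, by simp⟩, by simpa using hz, by simp [kanProd]⟩
  | succ n ih =>
    obtain ⟨⟨m, hm⟩, h0, h1⟩ := ih
    rw [Function.iterate_succ_apply']
    set p := kanMap^[n] (x, z)
    have hp : p.2 ≤ 1 / 1024 := by
      refine h1.trans (le_trans ?_ hzC)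
      have := kanProd_nonneg n x
      have := hC n
      gcongr
    have hcos : Real.cos (2 * π * p.1) = Real.cos (2 * π * (3 ^ n * x)) := by
      rw [hm]
      have : 2 * π * (3 ^ n * x + m) = 2 * π * (3 ^ n * x) + m * (2 * π) := by ring
      rw [this, Real.cos_add_int_mul_two_pi]
    have hstep : (kanMap p).2 = p.2 * (1 + Real.cos (2 * π * (3 ^ n * x)) / 32 * (1 - p.2)) := by
      simp only [kanMap, hcos]; ring
    have hw := one_add_le_kanWeight_sq (3 ^ n * x)
    have hc1 := Real.neg_one_le_cos (2 * π * (3 ^ n * x))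
    have hc2 := Real.cos_le_one (2 * π * (3 ^ n * x))
    refine ⟨⟨3 * m - ⌊3 * p.1⌋, ?_⟩, ?_, ?_⟩
    · simp only [kanMap, Int.fract, hm]
      push_cast; ring
    · rw [hstep]
      exact mul_nonneg h0 (by nlinarith)
    · rw [hstep]
      have hmul : 1 + Real.cos (2 * π * (3 ^ n * x)) / 32 * (1 - p.2) ≤
          kanWeight (3 ^ n * x) ^ 2 := by
        nlinarith
      have hs : kanProd (n + 1) x = kanProd n x * kanWeight (3 ^ n * x) := by
        unfold kanProd; rw [Finset.prod_range_succ]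
      calc _ ≤ p.2 * kanWeight (3 ^ n * x) ^ 2 := mul_le_mul_of_nonneg_left hmul h0
        _ ≤ (kanProd n x ^ 2 * z) * kanWeight (3 ^ n * x) ^ 2 :=
          mul_le_mul_of_nonneg_right h1 (sq_nonneg _)
        _ = _ := by rw [hs]; ring

/-- The basin of the boundary circle `A = S¹ × {0}` has positive
two-dimensional Lebesgue measure. -/
theorem stmt_12 :
    0 < volume {p : ℝ × ℝ | p.1 ∈ Set.Ico (0:ℝ) 1 ∧ p.2 ∈ Set.Icc (0:ℝ) 1 ∧
      Tendsto (fun n : ℕ => (kanMap^[n] p).2) atTop (𝓝 0)} := by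
  rw [pos_iff_ne_zero]
  intro hnull
  rw [measure_eq_zero_iff_ae_notMem, Measure.volume_eq_prod] at hnull
  have hfib := Measure.ae_ae_of_ae_prod hnull
  have hae := ae_tendsto_kanProd
  rw [ae_restrict_iff' measurableSet_Ioc] at hae
  have hbad : ∀ᵐ x : ℝ, x ∉ Ioo (0:ℝ) 1 := by
    filter_upwards [hfib, hae] with x hx hx2 hx01
    have hlim := hx2 ⟨hx01.1, hx01.2.le⟩
    obtain ⟨B, hB⟩ := hlim.bddAbove_range
    set C := max B 1
    have hC1 : 1 ≤ C := le_max_right _ _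
    have hC : ∀ n, kanProd n x ≤ C := fun n => (hB ⟨n, rfl⟩).trans (le_max_left _ _)
    set d := 1 / 1024 / C ^ 2
    have hd : 0 < d := by positivity
    have hd1 : C ^ 2 * d = 1 / 1024 := by simp only [d]; field_simp
    have hnot : ∀ᵐ z : ℝ, z ∉ Icc 0 d := by
      filter_upwards [hx] with z hz hzd
      have hzC : C ^ 2 * z ≤ 1 / 1024 := by
        rw [← hd1]; exact mul_le_mul_of_nonneg_left hzd.2 (sq_nonneg _)
      refine hz ⟨⟨hx01.1.le, hx01.2⟩, ⟨hzd.1, ?_⟩, ?_⟩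
      · nlinarith [hzd.1]
      · refine squeeze_zero (fun n => (kanMap_orbit_bound hzd.1 hzC hC n).2.1)
          (fun n => (kanMap_orbit_bound hzd.1 hzC hC n).2.2) ?_
        simpa using (hlim.pow 2).mul_const z
    rw [← measure_eq_zero_iff_ae_notMem, Real.volume_Icc] at hnot
    simp at hnot
    linarith
  rw [← measure_eq_zero_iff_ae_notMem, Real.volume_Ioo] at hbad
  simp at hbad
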